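/- arXiv:2311.13883 — 2 statements merged into one kernel-verified Lean document; each statement's English description precedes it below -/
import Mathlib

section
/- Let K ⊂ ℝ^d be a compact set, let F : P_2(K) → ℝ be lower semicontinuous with respect to weak convergence of probability measures, let τ > 0 and let μ_k ∈ P_2(K). Then the functional μ ↦ SW_2²(μ, μ_k)/(2τ) + F(μ) attains its minimum over P_2(K), i.e. the SW-JKO step admits a minimizer. -/
open MeasureTheory ENNReal Metric Filter
open scoped RealInnerProductSpace NNReal

noncomputable section

/-- `ℝ^d` as a Euclidean space. -/
abbrev Ed (d : ℕ) : Type := EuclideanSpace ℝ (Fin d)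

/-- `π` is a coupling of `μ` and `ν`. -/
def IsCoupling {E : Type*} [MeasurableSpace E] (π : Measure (E × E)) (μ ν : Measure E) : Prop :=
  π.map Prod.fst = μ ∧ π.map Prod.snd = ν

/-- Squared 2-Wasserstein distance. -/
def W2sq {E : Type*} [MeasurableSpace E] [NormedAddCommGroup E] (μ ν : Measure E) : ℝ≥0∞ :=
  ⨅ (π : Measure (E × E)) (_ : IsCoupling π μ ν), ∫⁻ p, (‖p.1 - p.2‖₊ : ℝ≥0∞) ^ 2 ∂π

/-- The uniform probability measure on the unit sphere `S^{d-1}`. -/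
def unifSphere (d : ℕ) : Measure (sphere (0 : Ed d) 1) :=
  ((volume : Measure (Ed d)).toSphere Set.univ)⁻¹ • (volume : Measure (Ed d)).toSphere

/-- Projection `P^θ(x) = ⟨x, θ⟩`. -/
def proj {d : ℕ} (θ : Ed d) (x : Ed d) : ℝ := ⟪x, θ⟫

/-- Squared Sliced-Wasserstein distance. -/
def SW2sq {d : ℕ} (μ ν : Measure (Ed d)) : ℝ≥0∞ :=
  ∫⁻ θ : sphere (0 : Ed d) 1,
    W2sq (μ.map (proj (θ : Ed d))) (ν.map (proj (θ : Ed d))) ∂(unifSphere d)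

/-- Sliced-Wasserstein distance. -/
def SW2 {d : ℕ} (μ ν : Measure (Ed d)) : ℝ := Real.sqrt (SW2sq μ ν).toReal

/-- Finite second moment. -/
def FiniteSecondMoment {d : ℕ} (μ : Measure (Ed d)) : Prop :=
  ∫⁻ x, (‖x‖₊ : ℝ≥0∞) ^ 2 ∂μ < ∞

/-- `μ ∈ P_2(K)`: probability measure supported in `K` with finite second moment. -/
def MemP2 {d : ℕ} (K : Set (Ed d)) (μ : Measure (Ed d)) : Prop :=
  IsProbabilityMeasure μ ∧ μ Kᶜ = 0 ∧ FiniteSecondMoment μ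

/-!
`P_2(K)` is weakly compact and `F` is lower semicontinuous on it, so only the lower semicontinuity
of `SW_2²` is at stake. By Prokhorov's theorem, in both directions, the map sending a coupling to
its pair of marginals is proper: over a compact set of pairs the couplings are uniformly tight.
`W_2²` is the fibrewise infimum along this closed map of the transport cost, which is lower
semicontinuous in the coupling, and is therefore lower semicontinuous on pairs of probability
measures. Since `P^θ_#μ` is jointly continuous in `(θ, μ)`, integrating over the sphere and applying
Fatou's lemma gives the same for `SW_2²`.
-/

open Topology

section Semicontinuity

theorem lowerSemicontinuous_iInf_fiber_of_isClosedMap {X Y α : Type*} [TopologicalSpace X]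
    [TopologicalSpace Y] [CompleteLinearOrder α] [DenselyOrdered α] {g : X → Y} {f : X → α}
    (hg : IsClosedMap g) (hf : LowerSemicontinuous f) :
    LowerSemicontinuous fun y => ⨅ (x : X) (_ : g x = y), f x := by
  intro y a ha
  obtain ⟨b, hab, hb⟩ := exists_between ha
  have isClosed_image : IsClosed (g '' (f ⁻¹' Set.Iic b)) := hg _ (hf.isClosed_preimage b)
  have y_notMem : y ∉ g '' (f ⁻¹' Set.Iic b) := by
    rintro ⟨x, hx, rfl⟩
    have iInf_fiber_le : ⨅ (x' : X) (_ : g x' = g x), f x' ≤ f x :=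
      iInf_le_of_le x (iInf_le _ rfl)
    exact (hb.trans_le iInf_fiber_le).not_ge hx
  filter_upwards [isClosed_image.isOpen_compl.mem_nhds y_notMem] with z hz
  exact hab.trans_le (le_iInf₂ fun x hx => le_of_not_ge fun hxb => hz ⟨x, hxb, hx⟩)

theorem lowerSemicontinuous_lintegral_of_forall {X Ω : Type*} [TopologicalSpace X]
    [FirstCountableTopology X] [MeasurableSpace Ω] {m : Measure Ω} {f : X → Ω → ℝ≥0∞}
    (hf : ∀ ω, LowerSemicontinuous fun x => f x ω) (hf_meas : ∀ x, Measurable (f x)) :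
    LowerSemicontinuous fun x => ∫⁻ ω, f x ω ∂m := by
  rw [lowerSemicontinuous_iff_le_liminf]
  intro x
  calc ∫⁻ ω, f x ω ∂m
      ≤ ∫⁻ ω, liminf (fun y => f y ω) (𝓝 x) ∂m := lintegral_mono fun ω => (hf ω).le_liminf x
    _ ≤ liminf (fun y => ∫⁻ ω, f y ω ∂m) (𝓝 x) := lintegral_liminf_le hf_meas

theorem lowerSemicontinuousOn_toReal {X : Type*} [TopologicalSpace X] {s : Set X} {f : X → ℝ≥0∞}
    (hf : LowerSemicontinuousOn f s) (hf_ne_top : ∀ x ∈ s, f x ≠ ∞) :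
    LowerSemicontinuousOn (fun x => (f x).toReal) s := by
  intro x hx a ha
  rcases lt_or_ge a 0 with ha_neg | ha_nonneg
  · exact Eventually.of_forall fun y => ha_neg.trans_le toReal_nonneg
  · filter_upwards [hf x hx _ ((ofReal_lt_iff_lt_toReal ha_nonneg (hf_ne_top x hx)).2 ha),
      self_mem_nhdsWithin] with y hy hys
    exact (ofReal_lt_iff_lt_toReal ha_nonneg (hf_ne_top y hys)).1 hy

end Semicontinuity

section WeakConvergence

theorem lowerSemicontinuous_lintegral_of_continuous {X : Type*} [TopologicalSpace X]
    [MeasurableSpace X] [OpensMeasurableSpace X] {f : X → ℝ≥0} (hf : Continuous f) :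
    LowerSemicontinuous fun μ : ProbabilityMeasure X => ∫⁻ x, f x ∂(μ : Measure X) := by
  let truncation (n : ℕ) : BoundedContinuousFunction X ℝ≥0 :=
    .mkOfBound ⟨fun x => min (f x) n, by fun_prop⟩ n fun x y =>
      abs_sub_le_of_nonneg_of_le (NNReal.coe_nonneg _) (NNReal.coe_le_coe.2 (min_le_right _ _))
        (NNReal.coe_nonneg _) (NNReal.coe_le_coe.2 (min_le_right _ _))
  have iSup_truncation (x : X) : ⨆ n, (truncation n x : ℝ≥0∞) = f x := by
    refine le_antisymm (iSup_le fun n => coe_le_coe.2 (min_le_left _ _)) ?_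
    obtain ⟨n, hn⟩ := exists_nat_ge (f x)
    exact le_iSup_of_le n (coe_le_coe.2 (le_min le_rfl hn))
  have monotone_truncation : Monotone fun n x => (truncation n x : ℝ≥0∞) := fun m n hmn x =>
    coe_le_coe.2 (min_le_min_left _ (Nat.cast_le.2 hmn))
  have lintegral_eq (μ : ProbabilityMeasure X) :
      ∫⁻ x, f x ∂(μ : Measure X) = ⨆ n, ∫⁻ x, truncation n x ∂(μ : Measure X) := by
    simp_rw [← iSup_truncation]
    exact lintegral_iSup (fun n => (truncation n).continuous.measurable.coe_nnreal_ennreal)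
      monotone_truncation
  simp_rw [lintegral_eq]
  exact lowerSemicontinuous_iSup fun n =>
    (ProbabilityMeasure.continuous_lintegral_boundedContinuousFunction _).lowerSemicontinuous

-- `f θ` pushes `μ` forward to the image of `δ_θ ⊗ μ` under the uncurried map.
theorem continuous_probabilityMeasure_map_uncurry {Θ X Y : Type*}
    [TopologicalSpace Θ] [SecondCountableTopology Θ] [TopologicalSpace.PseudoMetrizableSpace Θ]
    [TopologicalSpace X] [SecondCountableTopology X] [TopologicalSpace.PseudoMetrizableSpace X]
    [MeasurableSpace X] [OpensMeasurableSpace X]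
    [TopologicalSpace Y] [MeasurableSpace Y] [BorelSpace Y]
    {f : Θ → X → Y} (hf : Continuous (Function.uncurry f)) :
    Continuous fun p : Θ × ProbabilityMeasure X =>
      p.2.map (hf.uncurry_left p.1).measurable.aemeasurable := by
  borelize Θ
  have map_eq (p : Θ × ProbabilityMeasure X) :
      p.2.map (hf.uncurry_left p.1).measurable.aemeasurable =
        ((diracProba p.1).prod p.2).map hf.measurable.aemeasurable := by
    apply ProbabilityMeasure.toMeasure_injective
    simp only [ProbabilityMeasure.toMeasure_map, ProbabilityMeasure.toMeasure_prod]
    rw [diracProba, ProbabilityMeasure.coe_mk, Measure.dirac_prod,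
      Measure.map_map hf.measurable measurable_prodMk_left]
    rfl
  simp_rw [map_eq]
  exact (ProbabilityMeasure.continuous_map hf).comp <| ProbabilityMeasure.continuous_prod.comp <|
    (continuous_diracProba.comp continuous_fst).prodMk continuous_snd

theorem isCompact_setOf_measure_compl_eq_zero {X : Type*} [TopologicalSpace X] [T2Space X]
    [MeasurableSpace X] [BorelSpace X] {K : Set X} (hK : IsCompact K) :
    IsCompact {μ : ProbabilityMeasure X | (μ : Measure X) Kᶜ = 0} := by
  have := isCompact_setOfPred_probabilityMeasure_mass_eq_compl_isCompact_le (E := X)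
    (u := fun _ => 0) (K := fun _ => K) tendsto_const_nhds (fun _ => hK) (Or.inr monotone_const)
  simpa [ProbabilityMeasure.null_iff_toMeasure_null] using this

end WeakConvergence

section Marginals

variable {X Y : Type*} [MeasurableSpace X] [MeasurableSpace Y]

/-- The pair of marginals of a probability measure on a product. Its fibre over `(μ, ν)` is the set
`Π(μ, ν)` of couplings. -/
def marginals (π : ProbabilityMeasure (X × Y)) : ProbabilityMeasure X × ProbabilityMeasure Y :=
  (π.map measurable_fst.aemeasurable, π.map measurable_snd.aemeasurable)

variable [TopologicalSpace X] [BorelSpace X] [TopologicalSpace Y] [BorelSpace Y]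

theorem continuous_marginals [SecondCountableTopologyEither X Y] :
    Continuous (marginals : ProbabilityMeasure (X × Y) → _) :=
  (ProbabilityMeasure.continuous_map continuous_fst).prodMk
    (ProbabilityMeasure.continuous_map continuous_snd)

variable [PolishSpace X] [PolishSpace Y]

theorem isTightMeasureSet_of_isCompact {S : Set (ProbabilityMeasure X)} (hS : IsCompact S) :
    IsTightMeasureSet {(μ : Measure X) | μ ∈ S} := by
  let := TopologicalSpace.upgradeIsCompletelyMetrizable X
  exact isTightMeasureSet_of_isCompact_closure (hS.isClosed.closure_eq.symm ▸ hS)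

theorem isTightMeasureSet_preimage_marginals
    {S : Set (ProbabilityMeasure X × ProbabilityMeasure Y)} (hS : IsCompact S) :
    IsTightMeasureSet {(π : Measure (X × Y)) | π ∈ marginals ⁻¹' S} := by
  apply IsTightMeasureSet.prodMk
  · refine (isTightMeasureSet_of_isCompact (hS.image continuous_fst)).subset ?_
    rintro _ ⟨_, ⟨π, hπ, rfl⟩, rfl⟩
    exact ⟨(marginals π).1, ⟨_, hπ, rfl⟩, rfl⟩
  · refine (isTightMeasureSet_of_isCompact (hS.image continuous_snd)).subset ?_
    rintro _ ⟨_, ⟨π, hπ, rfl⟩, rfl⟩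
    exact ⟨(marginals π).2, ⟨_, hπ, rfl⟩, rfl⟩

theorem isProperMap_marginals : IsProperMap (marginals : ProbabilityMeasure (X × Y) → _) := by
  refine isProperMap_iff_isCompact_preimage.2 ⟨continuous_marginals, fun S hS => ?_⟩
  rw [← (hS.isClosed.preimage continuous_marginals).closure_eq]
  exact isCompact_closure_of_isTightMeasureSet (isTightMeasureSet_preimage_marginals hS)

end Marginals

section Wasserstein

theorem isCoupling_iff_marginals_eq {X : Type*} [MeasurableSpace X]
    {π : ProbabilityMeasure (X × X)} {μ ν : ProbabilityMeasure X} :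
    IsCoupling (π : Measure (X × X)) μ ν ↔ marginals π = (μ, ν) := by
  simp [IsCoupling, marginals, Prod.ext_iff, ← ProbabilityMeasure.toMeasure_injective.eq_iff]

theorem isProbabilityMeasure_of_isCoupling {X : Type*} [MeasurableSpace X] {π : Measure (X × X)}
    {μ ν : Measure X} [IsProbabilityMeasure μ] (hπ : IsCoupling π μ ν) :
    IsProbabilityMeasure π := by
  have : IsProbabilityMeasure (π.map Prod.fst) := hπ.1 ▸ inferInstance
  exact Measure.isProbabilityMeasure_of_map Prod.fst

variable {E : Type*} [NormedAddCommGroup E] [MeasurableSpace E]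

theorem W2sq_le_lintegral_of_isCoupling {π : Measure (E × E)} {μ ν : Measure E}
    (hπ : IsCoupling π μ ν) : W2sq μ ν ≤ ∫⁻ p, (‖p.1 - p.2‖₊ : ℝ≥0∞) ^ 2 ∂π := by
  unfold W2sq
  exact iInf₂_le π hπ

theorem W2sq_eq_iInf_marginals (μ ν : ProbabilityMeasure E) :
    W2sq (μ : Measure E) ν = ⨅ (π : ProbabilityMeasure (E × E)) (_ : marginals π = (μ, ν)),
      ∫⁻ p, ((‖p.1 - p.2‖₊ ^ 2 : ℝ≥0) : ℝ≥0∞) ∂(π : Measure (E × E)) := by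
  simp only [coe_pow]
  refine le_antisymm (le_iInf₂ fun π hπ => ?_) (le_iInf₂ fun π hπ => ?_)
  · exact W2sq_le_lintegral_of_isCoupling (isCoupling_iff_marginals_eq.2 hπ)
  · let πProb : ProbabilityMeasure (E × E) := ⟨π, isProbabilityMeasure_of_isCoupling hπ⟩
    exact iInf_le_of_le πProb (iInf_le _ (isCoupling_iff_marginals_eq (π := πProb).1 hπ))

theorem lowerSemicontinuous_W2sq [BorelSpace E] [CompleteSpace E] [SecondCountableTopology E] :
    LowerSemicontinuous fun p : ProbabilityMeasure E × ProbabilityMeasure E =>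
      W2sq (p.1 : Measure E) p.2 := by
  simp_rw [W2sq_eq_iInf_marginals]
  exact lowerSemicontinuous_iInf_fiber_of_isClosedMap isProperMap_marginals.isClosedMap
    (lowerSemicontinuous_lintegral_of_continuous (by fun_prop))

theorem W2sq_le_two_mul_secondMoment_add [OpensMeasurableSpace E]
    (μ ν : Measure E) [IsProbabilityMeasure μ] [IsProbabilityMeasure ν] :
    W2sq μ ν ≤ 2 * (∫⁻ x, (‖x‖₊ : ℝ≥0∞) ^ 2 ∂μ + ∫⁻ y, (‖y‖₊ : ℝ≥0∞) ^ 2 ∂ν) := by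
  have isCoupling_prod : IsCoupling (μ.prod ν) μ ν := by simp [IsCoupling]
  have enorm_sub_sq_le (x y : E) :
      (‖x - y‖₊ : ℝ≥0∞) ^ 2 ≤ 2 * ((‖x‖₊ : ℝ≥0∞) ^ 2 + (‖y‖₊ : ℝ≥0∞) ^ 2) := by
    norm_cast
    exact (pow_le_pow_left' (nnnorm_sub_le x y) 2).trans add_sq_le
  have measurable_sq : Measurable fun x : E => (‖x‖₊ : ℝ≥0∞) ^ 2 := by fun_prop
  calc W2sq μ ν
      ≤ ∫⁻ p, (‖p.1 - p.2‖₊ : ℝ≥0∞) ^ 2 ∂μ.prod ν :=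
        W2sq_le_lintegral_of_isCoupling isCoupling_prod
    _ ≤ ∫⁻ p, 2 * ((‖p.1‖₊ : ℝ≥0∞) ^ 2 + (‖p.2‖₊ : ℝ≥0∞) ^ 2) ∂μ.prod ν :=
        lintegral_mono fun p => enorm_sub_sq_le p.1 p.2
    _ = 2 * (∫⁻ p, (‖p.1‖₊ : ℝ≥0∞) ^ 2 ∂μ.prod ν + ∫⁻ p, (‖p.2‖₊ : ℝ≥0∞) ^ 2 ∂μ.prod ν) := by
        rw [lintegral_const_mul' _ _ ofNat_ne_top, lintegral_add_left (by fun_prop)]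
    _ = 2 * (∫⁻ x, (‖x‖₊ : ℝ≥0∞) ^ 2 ∂μ + ∫⁻ y, (‖y‖₊ : ℝ≥0∞) ^ 2 ∂ν) := by
        rw [← lintegral_map measurable_sq measurable_fst, isCoupling_prod.1,
          ← lintegral_map measurable_sq measurable_snd, isCoupling_prod.2]

end Wasserstein

section SlicedWasserstein

variable {d : ℕ}

theorem continuous_uncurry_proj :
    Continuous (Function.uncurry fun θ : sphere (0 : Ed d) 1 => proj (θ : Ed d)) := by
  unfold Function.uncurry proj
  fun_prop

theorem continuous_proj (θ : sphere (0 : Ed d) 1) : Continuous (proj (θ : Ed d)) :=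
  continuous_uncurry_proj.uncurry_left θ

theorem lowerSemicontinuous_W2sq_map_proj :
    LowerSemicontinuous fun p : sphere (0 : Ed d) 1 ×
        (ProbabilityMeasure (Ed d) × ProbabilityMeasure (Ed d)) =>
      W2sq ((p.2.1 : Measure (Ed d)).map (proj (p.1 : Ed d)))
        ((p.2.2 : Measure (Ed d)).map (proj (p.1 : Ed d))) := by
  have continuous_slice :=
    continuous_probabilityMeasure_map_uncurry (continuous_uncurry_proj (d := d))
  exact lowerSemicontinuous_W2sq.comp <|
    (continuous_slice.comp (continuous_fst.prodMk (continuous_fst.comp continuous_snd))).prodMk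
      (continuous_slice.comp (continuous_fst.prodMk (continuous_snd.comp continuous_snd)))

theorem lowerSemicontinuous_SW2sq :
    LowerSemicontinuous fun p : ProbabilityMeasure (Ed d) × ProbabilityMeasure (Ed d) =>
      SW2sq (p.1 : Measure (Ed d)) p.2 := by
  have lsc_measures (θ : sphere (0 : Ed d) 1) :
      LowerSemicontinuous fun p : ProbabilityMeasure (Ed d) × ProbabilityMeasure (Ed d) =>
        W2sq ((p.1 : Measure (Ed d)).map (proj (θ : Ed d)))
          ((p.2 : Measure (Ed d)).map (proj (θ : Ed d))) :=
    lowerSemicontinuous_W2sq_map_proj.comp (g := fun p => (θ, p)) (Continuous.prodMk_right θ)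
  have lsc_direction (p : ProbabilityMeasure (Ed d) × ProbabilityMeasure (Ed d)) :
      LowerSemicontinuous fun θ : sphere (0 : Ed d) 1 =>
        W2sq ((p.1 : Measure (Ed d)).map (proj (θ : Ed d)))
          ((p.2 : Measure (Ed d)).map (proj (θ : Ed d))) :=
    lowerSemicontinuous_W2sq_map_proj.comp (g := fun θ => (θ, p)) (Continuous.prodMk_left p)
  exact lowerSemicontinuous_lintegral_of_forall lsc_measures fun p => (lsc_direction p).measurable

theorem lintegral_sq_map_proj_le (θ : sphere (0 : Ed d) 1) (μ : Measure (Ed d)) :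
    ∫⁻ t, (‖t‖₊ : ℝ≥0∞) ^ 2 ∂μ.map (proj (θ : Ed d)) ≤ ∫⁻ x, (‖x‖₊ : ℝ≥0∞) ^ 2 ∂μ := by
  rw [lintegral_map (by fun_prop) (continuous_proj θ).measurable]
  have nnnorm_θ : ‖(θ : Ed d)‖₊ = 1 := NNReal.eq (norm_eq_of_mem_sphere θ)
  refine lintegral_mono fun x => pow_le_pow_left' (coe_le_coe.2 ?_) 2
  calc ‖proj (θ : Ed d) x‖₊ ≤ ‖x‖₊ * ‖(θ : Ed d)‖₊ := nnnorm_inner_le_nnnorm x (θ : Ed d)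
    _ = ‖x‖₊ := by rw [nnnorm_θ, mul_one]

theorem unifSphere_univ_le_one : unifSphere d Set.univ ≤ 1 :=
  ENNReal.inv_mul_le_one _

theorem SW2sq_le_two_mul_secondMoment_add (μ ν : Measure (Ed d)) [IsProbabilityMeasure μ]
    [IsProbabilityMeasure ν] :
    SW2sq μ ν ≤ 2 * (∫⁻ x, (‖x‖₊ : ℝ≥0∞) ^ 2 ∂μ + ∫⁻ y, (‖y‖₊ : ℝ≥0∞) ^ 2 ∂ν) := by
  have W2sq_map_proj_le (θ : sphere (0 : Ed d) 1) :
      W2sq (μ.map (proj (θ : Ed d))) (ν.map (proj (θ : Ed d))) ≤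
        2 * (∫⁻ x, (‖x‖₊ : ℝ≥0∞) ^ 2 ∂μ + ∫⁻ y, (‖y‖₊ : ℝ≥0∞) ^ 2 ∂ν) := by
    have := Measure.isProbabilityMeasure_map (μ := μ) (continuous_proj θ).aemeasurable
    have := Measure.isProbabilityMeasure_map (μ := ν) (continuous_proj θ).aemeasurable
    refine (W2sq_le_two_mul_secondMoment_add _ _).trans ?_
    gcongr 2 * (?_ + ?_) <;> exact lintegral_sq_map_proj_le θ _
  refine (lintegral_mono W2sq_map_proj_le).trans ?_
  rw [lintegral_const]
  exact mul_le_of_le_one_right' unifSphere_univ_le_one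

theorem SW2sq_ne_top {μ ν : Measure (Ed d)} [IsProbabilityMeasure μ] [IsProbabilityMeasure ν]
    (hμ : FiniteSecondMoment μ) (hν : FiniteSecondMoment ν) : SW2sq μ ν ≠ ∞ :=
  ne_top_of_le_ne_top (mul_ne_top ofNat_ne_top (add_ne_top.2 ⟨hμ.ne, hν.ne⟩))
    (SW2sq_le_two_mul_secondMoment_add μ ν)

end SlicedWasserstein

section MinimizingStep

variable {d : ℕ} {K : Set (Ed d)}

theorem finiteSecondMoment_of_measure_compl_eq_zero (hK : Bornology.IsBounded K)
    {μ : Measure (Ed d)} [IsFiniteMeasure μ] (hμ : μ Kᶜ = 0) : FiniteSecondMoment μ := by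
  obtain ⟨R, hR⟩ := hK.exists_norm_le
  have ae_le : ∀ᵐ x ∂μ, (‖x‖₊ : ℝ≥0∞) ^ 2 ≤ (R.toNNReal : ℝ≥0∞) ^ 2 := by
    filter_upwards [mem_ae_iff.2 hμ] with x hx
    gcongr
    exact NNReal.le_toNNReal_of_coe_le (hR x hx)
  calc ∫⁻ x, (‖x‖₊ : ℝ≥0∞) ^ 2 ∂μ
      ≤ ∫⁻ _, (R.toNNReal : ℝ≥0∞) ^ 2 ∂μ := lintegral_mono_ae ae_le
    _ < ∞ := by simpa using mul_lt_top (by simp) (measure_lt_top μ Set.univ)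

theorem setOf_memP2_eq_setOf_measure_compl_eq_zero (hK : Bornology.IsBounded K) :
    {μ : ProbabilityMeasure (Ed d) | MemP2 K μ.toMeasure} =
      {μ : ProbabilityMeasure (Ed d) | (μ : Measure (Ed d)) Kᶜ = 0} :=
  Set.ext fun _ => ⟨fun hμ => hμ.2.1,
    fun hμ => ⟨inferInstance, hμ, finiteSecondMoment_of_measure_compl_eq_zero hK hμ⟩⟩

theorem isCompact_setOf_memP2 (hK : IsCompact K) :
    IsCompact {μ : ProbabilityMeasure (Ed d) | MemP2 K μ.toMeasure} :=
  setOf_memP2_eq_setOf_measure_compl_eq_zero hK.isBounded ▸ isCompact_setOf_measure_compl_eq_zero hK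

theorem memP2_diracProba {x : Ed d} (hx : x ∈ K) : MemP2 K (diracProba x).toMeasure := by
  refine ⟨inferInstance, by simp [hx], ?_⟩
  simp [FiniteSecondMoment, diracProba]

theorem lowerSemicontinuousOn_SW2sq_toReal_div {τ : ℝ} (hτ : 0 < τ)
    {μk : ProbabilityMeasure (Ed d)} (hμk : FiniteSecondMoment μk.toMeasure) :
    LowerSemicontinuousOn
      (fun μ : ProbabilityMeasure (Ed d) => (SW2sq μ.toMeasure μk.toMeasure).toReal / (2 * τ))
      {μ | FiniteSecondMoment μ.toMeasure} := by
  have lsc_toReal := lowerSemicontinuousOn_toReal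
    ((lowerSemicontinuous_SW2sq.comp (Continuous.prodMk_left μk)).lowerSemicontinuousOn
      {μ | FiniteSecondMoment μ.toMeasure})
    fun μ hμ => SW2sq_ne_top hμ hμk
  exact (continuous_id.div_const (2 * τ)).comp_lowerSemicontinuousOn lsc_toReal
    fun a b hab => div_le_div_of_nonneg_right hab (by positivity)

theorem swjko_step_exists_minimizer_general (d : ℕ) (K : Set (Ed d)) (hK : IsCompact K)
    (hK_nonempty : K.Nonempty) (F : ProbabilityMeasure (Ed d) → ℝ)
    (hF : LowerSemicontinuousOn F {μ : ProbabilityMeasure (Ed d) | MemP2 K μ.toMeasure})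
    (τ : ℝ) (hτ : 0 < τ)
    (μk : ProbabilityMeasure (Ed d)) (hμk : FiniteSecondMoment μk.toMeasure) :
    ∃ μ : ProbabilityMeasure (Ed d), MemP2 K μ.toMeasure ∧
      ∀ ν : ProbabilityMeasure (Ed d), MemP2 K ν.toMeasure →
        (SW2sq μ.toMeasure μk.toMeasure).toReal / (2 * τ) + F μ ≤
          (SW2sq ν.toMeasure μk.toMeasure).toReal / (2 * τ) + F ν := by
  obtain ⟨x, hx⟩ := hK_nonempty
  have lsc_objective := ((lowerSemicontinuousOn_SW2sq_toReal_div hτ hμk).mono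
    fun μ (hμ : MemP2 K μ.toMeasure) => hμ.2.2).add hF
  obtain ⟨μ, hμ, hμ_min⟩ := lsc_objective.exists_isMinOn ⟨diracProba x, memP2_diracProba hx⟩
    (isCompact_setOf_memP2 hK)
  exact ⟨μ, hμ, fun ν hν => hμ_min hν⟩

end MinimizingStep

/-- For K compact and F lower semicontinuous w.r.t. weak convergence of
probability measures, the SW-JKO step attains its minimum over P_2(K). -/
theorem swjko_step_exists_minimizer (d : ℕ) (K : Set (Ed d)) (hK : IsCompact K)
    (F : ProbabilityMeasure (Ed d) → ℝ)
    (hF : LowerSemicontinuousOn F {μ : ProbabilityMeasure (Ed d) | MemP2 K μ.toMeasure})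
    (τ : ℝ) (hτ : 0 < τ)
    (μk : ProbabilityMeasure (Ed d)) (hμk : MemP2 K μk.toMeasure) :
    ∃ μ : ProbabilityMeasure (Ed d), MemP2 K μ.toMeasure ∧
      ∀ ν : ProbabilityMeasure (Ed d), MemP2 K ν.toMeasure →
        (SW2sq μ.toMeasure μk.toMeasure).toReal / (2 * τ) + F μ ≤
          (SW2sq ν.toMeasure μk.toMeasure).toReal / (2 * τ) + F ν := by
  have hK_nonempty : K.Nonempty := Filter.nonempty_of_mem (mem_ae_iff.2 hμk.2.1)
  exact swjko_step_exists_minimizer_general d K hK hK_nonempty F hF τ hτ μk hμk.2.2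
end
end

section
/- Let K ⊂ ℝ^d be compact, F : P_2(K) → ℝ bounded below, τ > 0, and let (μ_k^τ)_{k≥0} be a sequence such that for every k ≥ 0, μ_{k+1}^τ minimizes μ ↦ SW_2²(μ, μ_k^τ)/(2τ) + F(μ) over P_2(K). Define the piecewise constant interpolation μ^τ(0) = μ_0^τ and μ^τ(t) = μ_{k+1}^τ for t ∈ (kτ, (k+1)τ]. Then there exists a constant C ≥ 0, depending only on F(μ_0^τ) − inf F, such that for all 0 ≤ t < s, SW_2(μ^τ(t), μ^τ(s)) ≤ C(|t−s|^{1/2} + τ^{1/2}). -/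
open MeasureTheory ENNReal Metric Filter
open scoped RealInnerProductSpace NNReal

noncomputable section

/-- Piecewise constant interpolation of the SW-JKO scheme:
`μ^τ(0) = μ_0` and `μ^τ(t) = μ_{k+1}` for `t ∈ (kτ, (k+1)τ]`. -/
def pwConst {d : ℕ} (μseq : ℕ → Measure (Ed d)) (τ : ℝ) (t : ℝ) : Measure (Ed d) :=
  μseq ⌈t / τ⌉₊

/-! The scheme dissipates energy: comparing `μ_{k+1}` with `μ_k` gives
`SW_2²(μ_k, μ_{k+1}) ≤ 2τ (F(μ_k) - F(μ_{k+1}))`. Between two times `t < s` there are at most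
`(s - t)/τ + 1` steps, so Cauchy–Schwarz along the discrete trajectory and telescoping of the
energies yield `SW_2² ≤ 2 (F(μ_0) - inf F) (s - t + τ)`.

The triangle inequality for `SW_2` comes from Minkowski's inequality on the sphere applied to the
slicewise `W_2` triangle inequality, which is itself proved by gluing couplings. Measurability of
`θ ↦ W_2(P^θ_# μ, P^θ_# ν)` holds because this function is Lipschitz in `θ`. -/

section Gluing

open ProbabilityTheory

variable {X Y Z : Type*} [MeasurableSpace X] [MeasurableSpace Y] [MeasurableSpace Z]

-- Given `(x, y)`, the third coordinate is drawn from the conditional law of `z` given `y`.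
lemma exists_gluing [StandardBorelSpace Z] [Nonempty Z] {π₁ : Measure (X × Y)}
    {π₂ : Measure (Y × Z)} [SFinite π₁] [IsFiniteMeasure π₂] (h : π₁.snd = π₂.fst) :
    ∃ γ : Measure ((X × Y) × Z), γ.fst = π₁ ∧ γ.map (fun p => (p.1.2, p.2)) = π₂ := by
  refine ⟨π₁.compProd (π₂.condKernel.comap Prod.snd measurable_snd),
    Measure.fst_compProd _ _, Measure.ext_of_lintegral _ fun f hf => ?_⟩
  calc ∫⁻ q, f q ∂(π₁.compProd (π₂.condKernel.comap Prod.snd measurable_snd)).map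
          (fun p => (p.1.2, p.2))
      = ∫⁻ p, ∫⁻ z, f (p.2, z) ∂π₂.condKernel p.2 ∂π₁ := by
        rw [lintegral_map hf (by fun_prop), Measure.lintegral_compProd (by fun_prop)]
        rfl
    _ = ∫⁻ y, ∫⁻ z, f (y, z) ∂π₂.condKernel y ∂π₂.fst := by
        rw [← h, Measure.snd, lintegral_map hf.lintegral_kernel_prod_right' measurable_snd]
    _ = ∫⁻ q, f q ∂π₂ := by
        rw [← Measure.lintegral_compProd hf, π₂.disintegrate]

end Gluing

lemma eLpNorm_two_sq {α ε : Type*} [MeasurableSpace α] [ENorm ε] (f : α → ε) (μ : Measure α) :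
    eLpNorm f 2 μ ^ 2 = ∫⁻ x, ‖f x‖ₑ ^ 2 ∂μ := by
  simpa using eLpNorm_nnreal_pow_eq_lintegral (f := f) (μ := μ) (two_ne_zero (α := ℝ≥0))

/-- The `p`-Wasserstein distance, with the transport cost of a coupling written as the `L^p`
seminorm of the displacement. It is `∞` when there are no couplings. -/
def Wp {E : Type*} [MeasurableSpace E] [NormedAddCommGroup E] (p : ℝ≥0∞) (μ ν : Measure E) :
    ℝ≥0∞ :=
  ⨅ (π : Measure (E × E)) (_ : IsCoupling π μ ν), eLpNorm (fun q => q.1 - q.2) p π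

section Wasserstein

variable {E : Type*} [MeasurableSpace E] [NormedAddCommGroup E] {p : ℝ≥0∞} {μ ν ρ : Measure E}

lemma W2sq_eq_Wp_two_sq (μ ν : Measure E) : W2sq μ ν = Wp 2 μ ν ^ 2 := by
  have sq_iInf := (ENNReal.orderIsoRpow 2 two_pos).map_iInf₂
    (fun (π : Measure (E × E)) (_ : IsCoupling π μ ν) => eLpNorm (fun q => q.1 - q.2) 2 π)
  simp only [ENNReal.orderIsoRpow_apply, ENNReal.rpow_ofNat, eLpNorm_two_sq] at sq_iInf
  exact sq_iInf.symm

variable [BorelSpace E] [SecondCountableTopology E]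

lemma Wp_map_le_eLpNorm_sub {Ω : Type*} [MeasurableSpace Ω] {P : Measure Ω} {f g : Ω → E}
    (hf : Measurable f) (hg : Measurable g) : Wp p (P.map f) (P.map g) ≤ eLpNorm (f - g) p P := by
  have hcoupling : IsCoupling (P.map fun x => (f x, g x)) (P.map f) (P.map g) :=
    ⟨Measure.map_map measurable_fst (hf.prodMk hg), Measure.map_map measurable_snd (hf.prodMk hg)⟩
  calc Wp p (P.map f) (P.map g)
      ≤ eLpNorm (fun q => q.1 - q.2) p (P.map fun x => (f x, g x)) :=
        iInf₂_le (P.map fun x => (f x, g x)) hcoupling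
    _ = eLpNorm (f - g) p P := eLpNorm_map_measure (by fun_prop) (by fun_prop)

lemma Wp_self (μ : Measure E) : Wp p μ μ = 0 := by
  simpa using Wp_map_le_eLpNorm_sub (p := p) (P := μ) measurable_id measurable_id

lemma Wp_comm (μ ν : Measure E) : Wp p μ ν = Wp p ν μ := by
  suffices swap_le : ∀ μ ν : Measure E, Wp p μ ν ≤ Wp p ν μ from
    le_antisymm (swap_le μ ν) (swap_le ν μ)
  refine fun μ ν => le_iInf₂ fun π hπ => ?_
  calc Wp p μ ν = Wp p (π.map Prod.snd) (π.map Prod.fst) := by rw [hπ.1, hπ.2]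
    _ ≤ eLpNorm (Prod.snd - Prod.fst) p π := Wp_map_le_eLpNorm_sub measurable_snd measurable_fst
    _ = eLpNorm (fun q => q.1 - q.2) p π := eLpNorm_sub_comm _ _ _ _

lemma Wp_map_le_eLpNorm_sub_add_eLpNorm_sub (hp : 1 ≤ p) {Ω : Type*} [MeasurableSpace Ω]
    {P : Measure Ω} {f g h : Ω → E} (hf : Measurable f) (hg : Measurable g) (hh : Measurable h) :
    Wp p (P.map f) (P.map h) ≤ eLpNorm (f - g) p P + eLpNorm (g - h) p P := by
  calc Wp p (P.map f) (P.map h) ≤ eLpNorm (f - g + (g - h)) p P := by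
        rw [sub_add_sub_cancel]
        exact Wp_map_le_eLpNorm_sub hf hh
    _ ≤ eLpNorm (f - g) p P + eLpNorm (g - h) p P :=
        eLpNorm_add_le (hf.sub hg).aestronglyMeasurable (hg.sub hh).aestronglyMeasurable hp

lemma Wp_le_add_of_isCoupling [StandardBorelSpace E] [IsFiniteMeasure ν] (hp : 1 ≤ p)
    {π₁ π₂ : Measure (E × E)} (h₁ : IsCoupling π₁ μ ν) (h₂ : IsCoupling π₂ ν ρ) :
    Wp p μ ρ ≤ eLpNorm (fun q => q.1 - q.2) p π₁ + eLpNorm (fun q => q.1 - q.2) p π₂ := by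
  have : IsFiniteMeasure (π₁.map Prod.snd) := by rwa [h₁.2]
  have : IsFiniteMeasure (π₂.map Prod.fst) := by rwa [h₂.1]
  have := Measure.isFiniteMeasure_of_map (μ := π₁) measurable_snd.aemeasurable
  have := Measure.isFiniteMeasure_of_map (μ := π₂) measurable_fst.aemeasurable
  obtain ⟨γ, hγ₁, hγ₂⟩ := exists_gluing (h₁.2.trans h₂.1.symm)
  let x : (E × E) × E → E := fun q => q.1.1
  let y : (E × E) × E → E := fun q => q.1.2
  let z : (E × E) × E → E := fun q => q.2
  have hμ : γ.map x = μ := by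
    rw [← h₁.1, ← hγ₁, Measure.fst, Measure.map_map measurable_fst measurable_fst]
    rfl
  have hρ : γ.map z = ρ := by
    rw [← h₂.2, ← hγ₂, Measure.map_map (by fun_prop) (by fun_prop)]
    rfl
  have cost₁ : eLpNorm (fun q => q.1 - q.2) p π₁ = eLpNorm (x - y) p γ := by
    rw [← hγ₁, Measure.fst, eLpNorm_map_measure (by fun_prop) (by fun_prop)]
    rfl
  have cost₂ : eLpNorm (fun q => q.1 - q.2) p π₂ = eLpNorm (y - z) p γ := by
    rw [← hγ₂, eLpNorm_map_measure (by fun_prop) (by fun_prop)]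
    rfl
  rw [cost₁, cost₂, ← hμ, ← hρ]
  exact Wp_map_le_eLpNorm_sub_add_eLpNorm_sub hp (by fun_prop) (by fun_prop) (by fun_prop)

lemma Wp_triangle [StandardBorelSpace E] [IsFiniteMeasure ν] (hp : 1 ≤ p) :
    Wp p μ ρ ≤ Wp p μ ν + Wp p ν ρ := by
  simp only [Wp, ENNReal.iInf₂_add, ENNReal.add_iInf₂]
  exact le_iInf₂ fun _ h₂ => le_iInf₂ fun _ h₁ => Wp_le_add_of_isCoupling hp h₁ h₂

end Wasserstein

/-- The `2`-Wasserstein distance between the projections of `μ` and `ν` onto the direction `θ`,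
which need not be a unit vector. -/
def sliceW2 {d : ℕ} (μ ν : Measure (Ed d)) (θ : Ed d) : ℝ≥0∞ :=
  Wp 2 (μ.map (proj θ)) (ν.map (proj θ))

section Slices

variable {d : ℕ} {μ ν ρ : Measure (Ed d)}

lemma measurable_proj (θ : Ed d) : Measurable (proj θ) := by
  unfold proj
  fun_prop

lemma eLpNorm_proj_le (p : ℝ≥0∞) (μ : Measure (Ed d)) (θ : Ed d) :
    eLpNorm (proj θ) p μ ≤ ‖θ‖ₑ * eLpNorm id p μ :=
  eLpNorm_le_mul_eLpNorm_of_ae_le_mul'' p aestronglyMeasurable_id <| ae_of_all _ fun x => by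
    rw [mul_comm]
    exact ENNReal.coe_le_coe.2 (nnnorm_inner_le_nnnorm x θ)

lemma Wp_map_proj_le (p : ℝ≥0∞) (μ : Measure (Ed d)) (θ θ' : Ed d) :
    Wp p (μ.map (proj θ)) (μ.map (proj θ')) ≤ eLpNorm id p μ * edist θ θ' := by
  have proj_sub : proj θ - proj θ' = proj (θ - θ') := by
    ext x
    exact (inner_sub_right x θ θ').symm
  calc Wp p (μ.map (proj θ)) (μ.map (proj θ'))
      ≤ eLpNorm (proj θ - proj θ') p μ :=
        Wp_map_le_eLpNorm_sub (measurable_proj θ) (measurable_proj θ')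
    _ ≤ eLpNorm id p μ * edist θ θ' := by
        rw [proj_sub, mul_comm, edist_eq_enorm_sub]
        exact eLpNorm_proj_le p μ (θ - θ')

lemma sliceW2_self (μ : Measure (Ed d)) (θ : Ed d) : sliceW2 μ μ θ = 0 := Wp_self _

lemma sliceW2_comm (μ ν : Measure (Ed d)) (θ : Ed d) : sliceW2 μ ν θ = sliceW2 ν μ θ :=
  Wp_comm _ _

lemma sliceW2_triangle [IsFiniteMeasure ν] (θ : Ed d) :
    sliceW2 μ ρ θ ≤ sliceW2 μ ν θ + sliceW2 ν ρ θ :=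
  Wp_triangle one_le_two

lemma sliceW2_le_add_edist [IsFiniteMeasure μ] [IsFiniteMeasure ν] (θ θ' : Ed d) :
    sliceW2 μ ν θ ≤ sliceW2 μ ν θ' + (eLpNorm id 2 μ + eLpNorm id 2 ν) * edist θ θ' := by
  calc sliceW2 μ ν θ
      ≤ Wp 2 (μ.map (proj θ)) (μ.map (proj θ')) + Wp 2 (μ.map (proj θ')) (ν.map (proj θ)) :=
        Wp_triangle one_le_two
    _ ≤ Wp 2 (μ.map (proj θ)) (μ.map (proj θ')) +
          (sliceW2 μ ν θ' + Wp 2 (ν.map (proj θ')) (ν.map (proj θ))) := by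
        gcongr
        exact Wp_triangle one_le_two
    _ ≤ eLpNorm id 2 μ * edist θ θ' + (sliceW2 μ ν θ' + eLpNorm id 2 ν * edist θ θ') := by
        gcongr
        · exact Wp_map_proj_le 2 μ θ θ'
        · exact edist_comm θ θ' ▸ Wp_map_proj_le 2 ν θ' θ
    _ = sliceW2 μ ν θ' + (eLpNorm id 2 μ + eLpNorm id 2 ν) * edist θ θ' := by ring

lemma finiteSecondMoment_iff_memLp_id : FiniteSecondMoment μ ↔ MemLp id 2 μ := by
  have sq_lt_top : eLpNorm id 2 μ ^ 2 < ∞ ↔ eLpNorm id 2 μ < ∞ := by simp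
  rw [MemLp, and_iff_right aestronglyMeasurable_id, ← sq_lt_top, eLpNorm_two_sq]
  rfl

lemma continuous_sliceW2 [IsFiniteMeasure μ] [IsFiniteMeasure ν] (hμ : FiniteSecondMoment μ)
    (hν : FiniteSecondMoment ν) : Continuous (sliceW2 μ ν) := by
  rw [finiteSecondMoment_iff_memLp_id] at hμ hν
  exact continuous_of_le_add_edist _ (ENNReal.add_ne_top.2 ⟨hμ.eLpNorm_ne_top, hν.eLpNorm_ne_top⟩)
    sliceW2_le_add_edist

lemma sliceW2_zero [IsProbabilityMeasure μ] [IsProbabilityMeasure ν] : sliceW2 μ ν 0 = 0 := by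
  have proj_zero : proj (0 : Ed d) = fun _ => 0 := funext inner_zero_right
  simp [sliceW2, proj_zero, Measure.map_const, Wp_self]

lemma sliceW2_le [IsProbabilityMeasure μ] [IsProbabilityMeasure ν] (θ : Ed d) :
    sliceW2 μ ν θ ≤ (eLpNorm id 2 μ + eLpNorm id 2 ν) * ‖θ‖ₑ := by
  simpa [sliceW2_zero] using sliceW2_le_add_edist (μ := μ) (ν := ν) θ 0

end Slices

section SlicedWasserstein

variable {d : ℕ} {μ ν ρ : Measure (Ed d)}

instance isFiniteMeasure_unifSphere : IsFiniteMeasure (unifSphere d) :=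
  ⟨(ENNReal.inv_mul_le_one _).trans_lt one_lt_top⟩

lemma SW2_eq_toReal_eLpNorm (μ ν : Measure (Ed d)) :
    SW2 μ ν = (eLpNorm (fun θ : sphere (0 : Ed d) 1 => sliceW2 μ ν θ) 2 (unifSphere d)).toReal := by
  have sq_eq : SW2sq μ ν =
      eLpNorm (fun θ : sphere (0 : Ed d) 1 => sliceW2 μ ν θ) 2 (unifSphere d) ^ 2 := by
    simp [SW2sq, W2sq_eq_Wp_two_sq, eLpNorm_two_sq, sliceW2]
  rw [SW2, sq_eq, ENNReal.toReal_pow, Real.sqrt_sq ENNReal.toReal_nonneg]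

lemma memLp_sliceW2 [IsProbabilityMeasure μ] [IsProbabilityMeasure ν]
    (hμ : FiniteSecondMoment μ) (hν : FiniteSecondMoment ν) (p : ℝ≥0∞) :
    MemLp (fun θ : sphere (0 : Ed d) 1 => sliceW2 μ ν θ) p (unifSphere d) := by
  have hmeas := ((continuous_sliceW2 hμ hν).comp continuous_subtype_val).aestronglyMeasurable
    (μ := unifSphere d)
  rw [finiteSecondMoment_iff_memLp_id] at hμ hν
  have hle (θ : sphere (0 : Ed d) 1) : ‖sliceW2 μ ν θ‖ₑ ≤ eLpNorm id 2 μ + eLpNorm id 2 ν := by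
    simpa [← ofReal_norm] using sliceW2_le (μ := μ) (ν := ν) (θ : Ed d)
  refine ⟨hmeas, (eLpNorm_le_of_ae_enorm_bound (ae_of_all _ hle)).trans_lt ?_⟩
  exact ENNReal.mul_lt_top (ENNReal.add_lt_top.2 ⟨hμ.2, hν.2⟩)
    (ENNReal.rpow_lt_top_of_nonneg (by positivity) (measure_ne_top _ _))

lemma SW2_self (μ : Measure (Ed d)) : SW2 μ μ = 0 := by
  simp [SW2_eq_toReal_eLpNorm, sliceW2_self]

lemma SW2_comm (μ ν : Measure (Ed d)) : SW2 μ ν = SW2 ν μ := by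
  simp only [SW2_eq_toReal_eLpNorm, sliceW2_comm μ ν]

lemma SW2_triangle [IsProbabilityMeasure μ] [IsProbabilityMeasure ν] [IsProbabilityMeasure ρ]
    (hμ : FiniteSecondMoment μ) (hν : FiniteSecondMoment ν) (hρ : FiniteSecondMoment ρ) :
    SW2 μ ρ ≤ SW2 μ ν + SW2 ν ρ := by
  have hμν := memLp_sliceW2 hμ hν 2
  have hνρ := memLp_sliceW2 hν hρ 2
  simp only [SW2_eq_toReal_eLpNorm]
  rw [← ENNReal.toReal_add hμν.eLpNorm_ne_top hνρ.eLpNorm_ne_top]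
  refine ENNReal.toReal_mono (ENNReal.add_ne_top.2 ⟨hμν.eLpNorm_ne_top, hνρ.eLpNorm_ne_top⟩) ?_
  refine le_trans (eLpNorm_mono_enorm fun θ => ?_) (eLpNorm_add_le hμν.1 hνρ.1 one_le_two)
  exact sliceW2_triangle (θ : Ed d)

lemma SW2_sq (μ ν : Measure (Ed d)) : SW2 μ ν ^ 2 = (SW2sq μ ν).toReal :=
  Real.sq_sqrt ENNReal.toReal_nonneg

end SlicedWasserstein

/-- The set `P_2(K)` as a type of its own, to carry the pseudometric `SW_2`. -/
def P2 {d : ℕ} (K : Set (Ed d)) : Type := {μ : Measure (Ed d) // MemP2 K μ}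

instance pseudoMetricSpaceP2 {d : ℕ} {K : Set (Ed d)} : PseudoMetricSpace (P2 K) where
  dist μ ν := SW2 μ.1 ν.1
  dist_self μ := SW2_self μ.1
  dist_comm μ ν := SW2_comm μ.1 ν.1
  dist_triangle := by
    rintro ⟨μ, _, -, hμ⟩ ⟨ν, _, -, hν⟩ ⟨ρ, _, -, hρ⟩
    exact SW2_triangle hμ hν hρ

section MinimizingMovement

lemma ceil_div_sub_ceil_div_mul_le {s t τ : ℝ} (hτ : 0 < τ) (hs : 0 ≤ s) :
    ((⌈s / τ⌉₊ : ℝ) - ⌈t / τ⌉₊) * τ ≤ s - t + τ := by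
  have hs_ceil : (⌈s / τ⌉₊ : ℝ) ≤ s / τ + 1 := (Nat.ceil_lt_add_one (by positivity)).le
  have ht_ceil : t / τ ≤ ⌈t / τ⌉₊ := Nat.le_ceil _
  calc ((⌈s / τ⌉₊ : ℝ) - ⌈t / τ⌉₊) * τ ≤ (s / τ + 1 - t / τ) * τ := by gcongr
    _ = s - t + τ := by field_simp; ring

variable {X : Type*} [PseudoMetricSpace X]

lemma sq_dist_le_mul_sum_sq_dist (x : ℕ → X) {m n : ℕ} (hmn : m ≤ n) :
    dist (x m) (x n) ^ 2 ≤ ((n : ℝ) - m) * ∑ i ∈ Finset.Ico m n, dist (x i) (x (i + 1)) ^ 2 := by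
  calc dist (x m) (x n) ^ 2 ≤ (∑ i ∈ Finset.Ico m n, dist (x i) (x (i + 1))) ^ 2 := by
        gcongr
        exact dist_le_Ico_sum_dist x hmn
    _ ≤ ((n : ℝ) - m) * ∑ i ∈ Finset.Ico m n, dist (x i) (x (i + 1)) ^ 2 := by
        simpa [Nat.cast_sub hmn] using sq_sum_le_card_mul_sum_sq
          (s := Finset.Ico m n) (f := fun i => dist (x i) (x (i + 1)))

variable {x : ℕ → X} {φ : ℕ → ℝ} {τ : ℝ}

lemma antitone_of_sq_dist_le (hτ : 0 < τ)
    (hstep : ∀ k, dist (x k) (x (k + 1)) ^ 2 ≤ 2 * τ * (φ k - φ (k + 1))) : Antitone φ := by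
  refine antitone_nat_of_succ_le fun k => sub_nonneg.1 ?_
  exact nonneg_of_mul_nonneg_right ((sq_nonneg _).trans (hstep k)) (by positivity)

lemma sq_dist_le_mul_energy_drop
    (hstep : ∀ k, dist (x k) (x (k + 1)) ^ 2 ≤ 2 * τ * (φ k - φ (k + 1))) {m n : ℕ}
    (hmn : m ≤ n) : dist (x m) (x n) ^ 2 ≤ ((n : ℝ) - m) * (2 * τ * (φ m - φ n)) := by
  have hmn' : (0 : ℝ) ≤ n - m := by simpa using hmn
  calc dist (x m) (x n) ^ 2
      ≤ ((n : ℝ) - m) * ∑ i ∈ Finset.Ico m n, dist (x i) (x (i + 1)) ^ 2 :=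
        sq_dist_le_mul_sum_sq_dist x hmn
    _ ≤ ((n : ℝ) - m) * ∑ i ∈ Finset.Ico m n, 2 * τ * (φ i - φ (i + 1)) := by
        gcongr with i
        exact hstep i
    _ = ((n : ℝ) - m) * (2 * τ * (φ m - φ n)) := by
        have telescope := Finset.sum_Ico_sub φ hmn
        simp only [← neg_sub (φ (_ + 1)), mul_neg, Finset.sum_neg_distrib, ← Finset.mul_sum,
          telescope]
        ring

lemma dist_ceil_div_le_of_sq_dist_le {b s t : ℝ} (hτ : 0 < τ)
    (hstep : ∀ k, dist (x k) (x (k + 1)) ^ 2 ≤ 2 * τ * (φ k - φ (k + 1))) (hb : ∀ k, b ≤ φ k)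
    (ht : 0 ≤ t) (hts : t ≤ s) :
    dist (x ⌈t / τ⌉₊) (x ⌈s / τ⌉₊) ≤
      √(2 * (φ 0 - b)) * (|t - s| ^ ((1 : ℝ) / 2) + τ ^ ((1 : ℝ) / 2)) := by
  have hceil : ⌈t / τ⌉₊ ≤ ⌈s / τ⌉₊ := Nat.ceil_mono (by gcongr)
  have hdrop : φ ⌈t / τ⌉₊ - φ ⌈s / τ⌉₊ ≤ φ 0 - b :=
    sub_le_sub (antitone_of_sq_dist_le hτ hstep (Nat.zero_le _)) (hb _)
  have hgap : 0 ≤ φ 0 - b := sub_nonneg.2 (hb 0)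
  have hcount : (0 : ℝ) ≤ ⌈s / τ⌉₊ - ⌈t / τ⌉₊ := sub_nonneg.2 (Nat.cast_le.2 hceil)
  have hsq : dist (x ⌈t / τ⌉₊) (x ⌈s / τ⌉₊) ^ 2 ≤ 2 * (φ 0 - b) * (|t - s| + τ) :=
    calc dist (x ⌈t / τ⌉₊) (x ⌈s / τ⌉₊) ^ 2
        ≤ ((⌈s / τ⌉₊ : ℝ) - ⌈t / τ⌉₊) * (2 * τ * (φ ⌈t / τ⌉₊ - φ ⌈s / τ⌉₊)) :=
          sq_dist_le_mul_energy_drop hstep hceil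
      _ ≤ ((⌈s / τ⌉₊ : ℝ) - ⌈t / τ⌉₊) * (2 * τ * (φ 0 - b)) := by gcongr
      _ = 2 * (φ 0 - b) * (((⌈s / τ⌉₊ : ℝ) - ⌈t / τ⌉₊) * τ) := by ring
      _ ≤ 2 * (φ 0 - b) * (|t - s| + τ) := by
          rw [abs_sub_comm, abs_of_nonneg (sub_nonneg.2 hts)]
          gcongr
          exact ceil_div_sub_ceil_div_mul_le hτ (ht.trans hts)
  calc dist (x ⌈t / τ⌉₊) (x ⌈s / τ⌉₊)
      ≤ √(2 * (φ 0 - b) * (|t - s| + τ)) := Real.le_sqrt_of_sq_le hsq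
    _ = √(2 * (φ 0 - b)) * (|t - s| + τ) ^ ((1 : ℝ) / 2) := by
        rw [Real.sqrt_mul (by positivity), Real.sqrt_eq_rpow (|t - s| + τ)]
    _ ≤ √(2 * (φ 0 - b)) * (|t - s| ^ ((1 : ℝ) / 2) + τ ^ ((1 : ℝ) / 2)) := by
        gcongr
        exact Real.rpow_add_le_add_rpow (abs_nonneg _) hτ.le (by norm_num) (by norm_num)

end MinimizingMovement

lemma sq_SW2_le_of_le_add {d : ℕ} {μ ν : Measure (Ed d)} {F : Measure (Ed d) → ℝ} {τ : ℝ}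
    (hτ : 0 < τ)
    (hle : (SW2sq ν μ).toReal / (2 * τ) + F ν ≤ (SW2sq μ μ).toReal / (2 * τ) + F μ) :
    SW2 μ ν ^ 2 ≤ 2 * τ * (F μ - F ν) := by
  rw [← SW2_sq, ← SW2_sq, SW2_self, SW2_comm ν μ, zero_pow two_ne_zero, zero_div] at hle
  rw [mul_comm, ← div_le_iff₀ (by positivity)]
  linarith

theorem swjko_interpolation_equicontinuity_general {d : ℕ} {K : Set (Ed d)}
    {F : Measure (Ed d) → ℝ} (hF : BddBelow (F '' {μ : Measure (Ed d) | MemP2 K μ}))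
    {τ : ℝ} (hτ : 0 < τ) {μseq : ℕ → Measure (Ed d)} (hmem : ∀ k, MemP2 K (μseq k))
    (hmin : ∀ k, ∀ ν : Measure (Ed d), MemP2 K ν →
      (SW2sq (μseq (k + 1)) (μseq k)).toReal / (2 * τ) + F (μseq (k + 1)) ≤
        (SW2sq ν (μseq k)).toReal / (2 * τ) + F ν)
    {t s : ℝ} (ht : 0 ≤ t) (hts : t ≤ s) :
    SW2 (pwConst μseq τ t) (pwConst μseq τ s) ≤
      √(2 * (F (μseq 0) - sInf (F '' {μ : Measure (Ed d) | MemP2 K μ}))) *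
        (|t - s| ^ ((1 : ℝ) / 2) + τ ^ ((1 : ℝ) / 2)) := by
  let x (k : ℕ) : P2 K := ⟨μseq k, hmem k⟩
  have hstep (k : ℕ) : dist (x k) (x (k + 1)) ^ 2 ≤ 2 * τ * (F (μseq k) - F (μseq (k + 1))) :=
    sq_SW2_le_of_le_add hτ (hmin k (μseq k) (hmem k))
  have hinf (k : ℕ) : sInf (F '' {μ : Measure (Ed d) | MemP2 K μ}) ≤ F (μseq k) :=
    csInf_le hF ⟨_, hmem k, rfl⟩
  exact dist_ceil_div_le_of_sq_dist_le (x := x) (φ := fun k => F (μseq k)) hτ hstep hinf ht hts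

/-- There is a constant C ≥ 0, depending only on F(μ_0) - inf F, such that the
piecewise constant interpolation of the SW-JKO scheme satisfies
SW_2(μ^τ(t), μ^τ(s)) ≤ C (|t-s|^{1/2} + τ^{1/2}) for all 0 ≤ t < s. -/
theorem swjko_interpolation_equicontinuity :
    ∃ C : ℝ → ℝ,
      ∀ (d : ℕ) (K : Set (Ed d)), IsCompact K →
      ∀ F : Measure (Ed d) → ℝ, BddBelow (F '' {μ : Measure (Ed d) | MemP2 K μ}) →
      ∀ τ : ℝ, 0 < τ →
      ∀ μseq : ℕ → Measure (Ed d), (∀ k, MemP2 K (μseq k)) →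
      (∀ k, ∀ ν : Measure (Ed d), MemP2 K ν →
        (SW2sq (μseq (k + 1)) (μseq k)).toReal / (2 * τ) + F (μseq (k + 1)) ≤
          (SW2sq ν (μseq k)).toReal / (2 * τ) + F ν) →
      0 ≤ C (F (μseq 0) - sInf (F '' {μ : Measure (Ed d) | MemP2 K μ})) ∧
      ∀ t s : ℝ, 0 ≤ t → t < s →
        SW2 (pwConst μseq τ t) (pwConst μseq τ s) ≤
          C (F (μseq 0) - sInf (F '' {μ : Measure (Ed d) | MemP2 K μ})) *
            (|t - s| ^ ((1 : ℝ) / 2) + τ ^ ((1 : ℝ) / 2)) :=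
  ⟨fun D => √(2 * D), fun _ _ _ _ hF _ hτ _ hmem hmin => ⟨Real.sqrt_nonneg _, fun _ _ ht hts =>
    swjko_interpolation_equicontinuity_general hF hτ hmem hmin ht hts.le⟩⟩
end
end
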